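/- Let K have characteristic zero and let A = A(f_A) be a hyperplane arrangement of d ≥ 2 hyperplanes in ℙⁿ, n ≥ 2. Let ℓ be a general linear form with dual point Q = ℓ∨, and let r_A = (f_A, ∂f_A/∂ℓ) : Jac(f_A) be the general residual. Then: (i) every homogeneous element g ∈ r_A of degree at most d − 2 vanishes at Q, i.e. [r_A]_j = [r_A ∩ I_Q]_j for all j ≤ d − 2; and (ii) r_A = (r_A ∩ I_Q) + (∂f_A/∂ℓ), while (∂f_A/∂ℓ)(Q) ≠ 0, so that ∂f_A/∂ℓ belongs to a minimal generating set of r_A. -/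

import Mathlib

open MvPolynomial

/-- The derivative `∂f/∂ℓ = Σᵢ aᵢ·∂f/∂xᵢ` of `f` in the direction of the linear form
`ℓ = Σᵢ aᵢxᵢ` with coefficient vector `a`. -/
noncomputable def lderiv {K : Type*} [CommRing K] {m : ℕ} (a : Fin m → K)
    (f : MvPolynomial (Fin m) K) : MvPolynomial (Fin m) K :=
  ∑ i, a i • pderiv i f

/-- The Jacobian ideal of `f`, generated by all partial derivatives of `f`. -/
noncomputable def jacobianIdeal {K : Type*} [CommRing K] {m : ℕ}
    (f : MvPolynomial (Fin m) K) : Ideal (MvPolynomial (Fin m) K) :=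
  Ideal.span (Set.range fun i => pderiv i f)

/-- The general residual of the arrangement with defining polynomial `f` with respect to
the linear form with coefficient vector `a`: `r = (f, ∂f/∂ℓ) : Jac(f)`. -/
noncomputable def genResidual {K : Type*} [CommRing K] {m : ℕ} (a : Fin m → K)
    (f : MvPolynomial (Fin m) K) : Ideal (MvPolynomial (Fin m) K) :=
  (Ideal.span {f, lderiv a f}).colon (jacobianIdeal f)

/-- The homogeneous (prime) ideal `I_Q` of the point `Q` with coordinate vector `a`,
generated by the linear forms vanishing at `Q`. -/
noncomputable def pointIdeal {K : Type*} [CommRing K] {m : ℕ} (a : Fin m → K) :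
    Ideal (MvPolynomial (Fin m) K) :=
  Ideal.span {h : MvPolynomial (Fin m) K | h.IsHomogeneous 1 ∧ eval a h = 0}

/-- The irrelevant maximal ideal `𝔪 = (x₀, …, xₙ)`. -/
noncomputable def irrelevant (K : Type*) [CommRing K] (m : ℕ) :
    Ideal (MvPolynomial (Fin m) K) :=
  Ideal.span (Set.range X)

/-!
Let `f` be homogeneous of degree `d` and `D = ∂f/∂ℓ`, with `f` and `D` relatively prime.
If `g ∈ (f, D) : Jac(f)` is homogeneous of degree `j ≤ d - 2`, write `g·∂ᵢf ≡ Bᵢ·D` modulo `f`,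
with `Bᵢ` homogeneous of degree `j`.  Weighting these congruences by `xᵢ` and using Euler's identity
gives `f ∣ (∑ xᵢBᵢ)·D`, and weighting them by `aᵢ` gives `f ∣ (g - ∑ aᵢBᵢ)·D`.  Cancelling `D` and
comparing degrees, `∑ xᵢBᵢ = 0` and `g = ∑ aᵢBᵢ`, so `g(a) = ∑ aᵢBᵢ(a) = 0`.

When `f` is squarefree, a common prime factor `p` of `f` and `D` divides `∂p/∂ℓ`, which has smaller
degree and is nonzero because Euler's identity gives `(∂p/∂ℓ)(a) = deg p · p(a)`.  Hence any point
with `f(a) ≠ 0` is general enough.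
-/

section Graded

theorem isHomogeneous_colon {ι σ A : Type*} [DecidableEq ι] [AddRightCancelMonoid ι]
    [CommSemiring A] [SetLike σ A] [AddSubmonoidClass σ A] (𝒜 : ι → σ) [GradedRing 𝒜]
    {I : Ideal A} {S : Set A} (hI : I.IsHomogeneous 𝒜)
    (hS : ∀ s ∈ S, SetLike.IsHomogeneousElem 𝒜 s) : (I.colon S).IsHomogeneous 𝒜 := by
  intro i r hr
  refine Submodule.mem_colon.mpr fun s hs => ?_
  obtain ⟨k, hk⟩ := hS s hs
  rw [smul_eq_mul, ← DirectSum.coe_decompose_mul_add_of_right_mem 𝒜 hk]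
  exact hI _ (Submodule.mem_colon.mp hr s hs)

attribute [local instance] MvPolynomial.gradedAlgebra

variable {σ R : Type*} [CommRing R] {f h p q u : MvPolynomial σ R} {d e j : ℕ}

theorem homogeneousComponent_add_mul (hq : q.IsHomogeneous e) (p : MvPolynomial σ R) (j : ℕ) :
    homogeneousComponent (j + e) (p * q) = homogeneousComponent j p * q := by
  have hmul := DirectSum.coe_decompose_mul_add_of_right_mem (homogeneousSubmodule σ R)
    (i := j) (a := p) hq
  exact (decomposition.decompose'_apply _ _).symm.trans
    (hmul.trans (congrArg (· * q) (decomposition.decompose'_apply _ _)))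

theorem dvd_homogeneousComponent (hf : f.IsHomogeneous d) (hfp : f ∣ p) (j : ℕ) :
    f ∣ homogeneousComponent j p := by
  rw [← Ideal.mem_span_singleton] at hfp ⊢
  have hspan : (Ideal.span {f}).IsHomogeneous (homogeneousSubmodule σ R) :=
    Ideal.homogeneous_span _ _ (by rintro _ rfl; exact ⟨d, hf⟩)
  exact homogeneousComponent_mem_of_mem hspan hfp j

theorem exists_isHomogeneous_dvd_sub_mul (hf : f.IsHomogeneous d) (hh : h.IsHomogeneous e)
    (hu : u.IsHomogeneous (j + e)) (hmem : u ∈ Ideal.span {f, h}) :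
    ∃ b : MvPolynomial σ R, b.IsHomogeneous j ∧ f ∣ u - b * h := by
  obtain ⟨s, b, hsb⟩ := Ideal.mem_span_pair.mp hmem
  refine ⟨homogeneousComponent j b, homogeneousComponent_isHomogeneous j b, ?_⟩
  have hdvd : f ∣ u - b * h := ⟨s, by linear_combination -hsb⟩
  have hcomp := dvd_homogeneousComponent hf hdvd (j + e)
  rwa [map_sub, homogeneousComponent_eq_self hu, homogeneousComponent_add_mul hh] at hcomp

theorem eq_zero_of_dvd_of_isHomogeneous [NoZeroDivisors R] (hf : f.IsHomogeneous d)
    (hp : p.IsHomogeneous e) (hed : e < d) (hfp : f ∣ p) : p = 0 := by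
  by_contra hp0
  have hle := totalDegree_le_of_dvd_of_isDomain hfp hp0
  rw [hf.totalDegree (ne_zero_of_dvd_ne_zero hp0 hfp), hp.totalDegree hp0] at hle
  exact hed.not_ge hle

end Graded

section HomogeneousFactors

variable {σ R : Type*} [CommRing R] {f p : MvPolynomial σ R} {d : ℕ}

theorem order_toMvPowerSeries_le_totalDegree (hp : p ≠ 0) :
    (p : MvPowerSeries σ R).order ≤ p.totalDegree := by
  obtain ⟨s, hs⟩ := ne_zero_iff.mp hp
  refine (MvPowerSeries.order_le (d := s) (by rwa [coeff_coe])).trans ?_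
  exact_mod_cast le_totalDegree (mem_support_iff.mpr hs)

theorem le_order_toMvPowerSeries_of_isHomogeneous (hp : p.IsHomogeneous d) :
    (d : ℕ∞) ≤ (p : MvPowerSeries σ R).order :=
  MvPowerSeries.nat_le_order fun s hs => by
    rw [coeff_coe]
    exact hp.coeff_eq_zero hs.ne

theorem isHomogeneous_totalDegree_of_le_order
    (hp : (p.totalDegree : ℕ∞) ≤ (p : MvPowerSeries σ R).order) :
    p.IsHomogeneous p.totalDegree := by
  intro s hs
  have hord : p.totalDegree ≤ s.degree := by
    exact_mod_cast hp.trans (MvPowerSeries.order_le (by rwa [coeff_coe]))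
  have hweight : Finsupp.weight 1 s = s.degree :=
    (DFunLike.congr_fun Finsupp.degree_eq_weight_one s).symm
  exact hweight.trans ((le_totalDegree (mem_support_iff.mpr hs)).antisymm hord)

theorem isHomogeneous_totalDegree_of_dvd [NoZeroDivisors R] (hf : f.IsHomogeneous d)
    (hf0 : f ≠ 0) (hpf : p ∣ f) : p.IsHomogeneous p.totalDegree := by
  obtain ⟨q, rfl⟩ := hpf
  have hp0 := left_ne_zero_of_mul hf0
  have hq0 := right_ne_zero_of_mul hf0
  apply isHomogeneous_totalDegree_of_le_order
  have hdeg : p.totalDegree + q.totalDegree = d := by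
    rw [← totalDegree_mul_of_isDomain hp0 hq0, hf.totalDegree hf0]
  have hord := le_order_toMvPowerSeries_of_isHomogeneous hf
  rw [coe_mul, MvPowerSeries.order_mul, ← hdeg, Nat.cast_add] at hord
  exact (ENat.add_le_add_iff_right (ENat.natCast_ne_top _)).mp
    (hord.trans (add_le_add_right (order_toMvPowerSeries_le_totalDegree hq0) _))

end HomogeneousFactors

section DirectionalDerivative

variable {R : Type*} [CommRing R] {m d : ℕ} {f : MvPolynomial (Fin m) R}

theorem lderiv_mul (a : Fin m → R) (p q : MvPolynomial (Fin m) R) :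
    lderiv a (p * q) = p * lderiv a q + q * lderiv a p := by
  simp only [lderiv, Derivation.leibniz, smul_add, Finset.sum_add_distrib, smul_eq_mul,
    Finset.mul_sum, mul_smul_comm]

theorem isHomogeneous_lderiv (hf : f.IsHomogeneous d) (a : Fin m → R) :
    (lderiv a f).IsHomogeneous (d - 1) :=
  IsHomogeneous.sum _ _ _ fun i _ => by
    rw [smul_eq_C_mul]
    exact hf.pderiv.C_mul (a i)

theorem eval_lderiv_self (hf : f.IsHomogeneous d) (a : Fin m → R) :
    eval a (lderiv a f) = d * eval a f := by
  simpa [lderiv, smul_eval] using congrArg (eval a) hf.sum_X_mul_pderiv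

theorem isRelPrime_lderiv_of_squarefree {K : Type*} [Field K] [CharZero K]
    {f : MvPolynomial (Fin m) K} (hf : f.IsHomogeneous d) (hsq : Squarefree f) {a : Fin m → K}
    (ha : eval a f ≠ 0) : IsRelPrime f (lderiv a f) := by
  refine WfDvdMonoid.isRelPrime_of_no_irreducible_factors (fun h => hsq.ne_zero h.1) ?_
  rintro p hp ⟨q, rfl⟩ hpD
  have hphom := isHomogeneous_totalDegree_of_dvd hf hsq.ne_zero (Dvd.intro q rfl)
  have hpdeg : p.totalDegree ≠ 0 := fun h0 => hp.not_isUnit <| by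
    have hpC := totalDegree_eq_zero_iff_eq_C.mp h0
    rw [hpC]
    exact (IsUnit.mk0 _ fun hc => hp.ne_zero (by rw [hpC, hc, C_0])).map C
  have hpq : ¬ p ∣ q := fun h => hp.not_isUnit (hsq p (mul_dvd_mul_left p h))
  have hpDp : p ∣ lderiv a p := by
    rw [lderiv_mul, dvd_add_right (dvd_mul_right _ _)] at hpD
    exact (hp.prime.dvd_or_dvd hpD).resolve_left hpq
  have hDp := eq_zero_of_dvd_of_isHomogeneous hphom (isHomogeneous_lderiv hphom a)
    (by omega) hpDp
  have heuler := eval_lderiv_self hphom a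
  rw [hDp, map_zero] at heuler
  rw [map_mul] at ha
  exact mul_ne_zero (Nat.cast_ne_zero.mpr hpdeg) (left_ne_zero_of_mul ha) heuler.symm

end DirectionalDerivative

section Residual

variable {R : Type*} [CommRing R] {m d j : ℕ} {a : Fin m → R} {f g : MvPolynomial (Fin m) R}

theorem genResidual_eq_colon_range (a : Fin m → R) (f : MvPolynomial (Fin m) R) :
    genResidual a f = (Ideal.span {f, lderiv a f}).colon (Set.range fun i => pderiv i f) :=
  Ideal.colon_span

theorem lderiv_mem_genResidual (a : Fin m → R) (f : MvPolynomial (Fin m) R) :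
    lderiv a f ∈ genResidual a f :=
  Submodule.mem_colon.mpr fun s _ =>
    Ideal.mul_mem_right s _ (Ideal.subset_span (Set.mem_insert_of_mem f rfl))

theorem homogeneousComponent_mem_genResidual (hf : f.IsHomogeneous d)
    (hg : g ∈ genResidual a f) (j : ℕ) : homogeneousComponent j g ∈ genResidual a f := by
  let _ := gradedAlgebra (σ := Fin m) (R := R)
  rw [genResidual_eq_colon_range] at hg ⊢
  refine homogeneousComponent_mem_of_mem (isHomogeneous_colon _ ?_ ?_) hg j
  · refine Ideal.homogeneous_span _ _ ?_
    rintro _ (rfl | rfl)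
    exacts [⟨d, hf⟩, ⟨d - 1, isHomogeneous_lderiv hf a⟩]
  · rintro _ ⟨i, rfl⟩
    exact ⟨d - 1, hf.pderiv⟩

theorem eval_eq_zero_of_mem_genResidual [IsDomain R] [UniqueFactorizationMonoid R]
    (hf : f.IsHomogeneous d) (hrel : IsRelPrime f (lderiv a f)) (hg : g ∈ genResidual a f)
    (hgj : g.IsHomogeneous j) (hj : j + 1 < d) : eval a g = 0 := by
  have hlift (i : Fin m) : ∃ b : MvPolynomial (Fin m) R,
      b.IsHomogeneous j ∧ f ∣ g * pderiv i f - b * lderiv a f := by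
    rw [genResidual_eq_colon_range, Submodule.mem_colon] at hg
    exact exists_isHomogeneous_dvd_sub_mul hf (isHomogeneous_lderiv hf a) (hgj.mul hf.pderiv)
      (hg _ ⟨i, rfl⟩)
  choose b hbhom hb using hlift
  have hcomb (c : Fin m → MvPolynomial (Fin m) R) :
      f ∣ g * ∑ i, c i * pderiv i f - (∑ i, c i * b i) * lderiv a f := by
    have hsum : f ∣ ∑ i, c i * (g * pderiv i f - b i * lderiv a f) :=
      Finset.dvd_sum fun i _ => (hb i).mul_left (c i)
    convert hsum using 1
    rw [Finset.mul_sum, Finset.sum_mul, ← Finset.sum_sub_distrib]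
    exact Finset.sum_congr rfl fun i _ => by ring
  have hX : ∑ i, X i * b i = 0 := by
    refine eq_zero_of_dvd_of_isHomogeneous hf
      (IsHomogeneous.sum _ _ (1 + j) fun i _ => (isHomogeneous_X R i).mul (hbhom i)) (by omega) ?_
    refine hrel.dvd_of_dvd_mul_right ?_
    have hXf := hcomb X
    rw [hf.sum_X_mul_pderiv, mul_smul_comm] at hXf
    exact (dvd_sub_right (dvd_nsmul_of_dvd d (dvd_mul_left f g))).mp hXf
  have hC : g - ∑ i, C (a i) * b i = 0 := by
    refine eq_zero_of_dvd_of_isHomogeneous hf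
      (hgj.sub (IsHomogeneous.sum _ _ j fun i _ => (hbhom i).C_mul (a i))) (by omega) ?_
    refine hrel.dvd_of_dvd_mul_right ?_
    simpa only [lderiv, smul_eq_C_mul, sub_mul] using hcomb fun i => C (a i)
  calc eval a g = eval a (∑ i, C (a i) * b i) := by rw [sub_eq_zero.mp hC]
    _ = eval a (∑ i, X i * b i) := by simp only [map_sum, map_mul, eval_C, eval_X]
    _ = 0 := by rw [hX, map_zero]

end Residual

section PointIdeal

theorem aeval_smul_of_isHomogeneous {σ R A : Type*} [CommSemiring R] [CommSemiring A]
    [Algebra R A] {g : MvPolynomial σ R} {d : ℕ} (hg : g.IsHomogeneous d) (a : σ → R) (y : A) :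
    aeval (fun i => a i • y) g = eval a g • y ^ d := by
  rw [aeval_def, eval₂_eq, eval_eq, Finset.sum_smul]
  refine Finset.sum_congr rfl fun s hs => ?_
  simp only [smul_pow, Finset.prod_smul]
  rw [Finset.prod_pow_eq_pow_sum, ← hg.degree_eq_sum_deg_support hs, ← Algebra.smul_def,
    smul_smul]

variable {K : Type*} [Field K] {m d : ℕ} {a : Fin m → K} {D g : MvPolynomial (Fin m) K}
  {J : Ideal (MvPolynomial (Fin m) K)}

theorem mem_pointIdeal_of_eval_eq_zero (ha : a ≠ 0) (hg : g.IsHomogeneous d)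
    (hga : eval a g = 0) : g ∈ pointIdeal a := by
  obtain ⟨i, hi⟩ := Function.ne_iff.mp ha
  let π := Ideal.Quotient.mkₐ K (pointIdeal a)
  have hX (k : Fin m) : π (X k) = a k • π ((a i)⁻¹ • X i) := by
    rw [← map_smul]
    refine Ideal.Quotient.eq.mpr (Ideal.subset_span ⟨?_, ?_⟩)
    · simp only [smul_eq_C_mul]
      exact (isHomogeneous_X K k).sub (((isHomogeneous_X K i).C_mul _).C_mul _)
    · simp [smul_eval, inv_mul_cancel₀ hi]
  have hπ : π g = eval a g • π ((a i)⁻¹ • X i) ^ d := by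
    rw [← aeval_smul_of_isHomogeneous hg, ← funext hX]
    exact DFunLike.congr_fun (aeval_unique π) g
  rw [hga, zero_smul] at hπ
  exact Ideal.Quotient.eq_zero_iff_mem.mp hπ

theorem exists_isHomogeneous_eval_eq (ha : a ≠ 0) (k : ℕ) (c : K) :
    ∃ h : MvPolynomial (Fin m) K, h.IsHomogeneous k ∧ eval a h = c := by
  obtain ⟨i, hi⟩ := Function.ne_iff.mp ha
  refine ⟨C (c / a i ^ k) * X i ^ k, isHomogeneous_C_mul_X_pow _ i k, ?_⟩
  rw [map_mul, map_pow, eval_C, eval_X, div_mul_cancel₀ c (pow_ne_zero k hi)]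

theorem eq_inf_pointIdeal_sup_span (ha : a ≠ 0)
    (hJ : ∀ g ∈ J, ∀ j, homogeneousComponent j g ∈ J)
    (hvan : ∀ g ∈ J, ∀ j < d, g.IsHomogeneous j → eval a g = 0)
    (hDJ : D ∈ J) (hD : D.IsHomogeneous d) (hDa : eval a D ≠ 0) :
    J = (J ⊓ pointIdeal a) ⊔ Ideal.span {D} := by
  refine le_antisymm (fun g hg => ?_)
    (sup_le inf_le_left ((Ideal.span_singleton_le_iff_mem J).mpr hDJ))
  rw [← sum_homogeneousComponent g]
  refine Ideal.sum_mem _ fun j _ => ?_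
  have hq := hJ g hg j
  have hqhom := homogeneousComponent_isHomogeneous j g
  set q := homogeneousComponent j g
  obtain hj | hj := lt_or_ge j d
  · exact Ideal.mem_sup_left
      ⟨hq, mem_pointIdeal_of_eval_eq_zero ha hqhom (hvan q hq j hj hqhom)⟩
  · obtain ⟨h, hhom, hh⟩ := exists_isHomogeneous_eval_eq ha (j - d) (eval a q / eval a D)
    have hhD : (h * D).IsHomogeneous j := Nat.sub_add_cancel hj ▸ hhom.mul hD
    have heval : eval a (q - h * D) = 0 := by
      rw [map_sub, map_mul, hh, div_mul_cancel₀ _ hDa, sub_self]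
    rw [← sub_add_cancel q (h * D)]
    exact Submodule.add_mem_sup
      ⟨J.sub_mem hq (J.mul_mem_left h hDJ),
        mem_pointIdeal_of_eval_eq_zero ha (hqhom.sub hhD) heval⟩
      (Ideal.mul_mem_left _ h (Ideal.mem_span_singleton_self D))

end PointIdeal

theorem notMem_irrelevant_mul {R : Type*} [CommRing R] {m k : ℕ} {a : Fin m → R}
    {D : MvPolynomial (Fin m) R} {J : Ideal (MvPolynomial (Fin m) R)}
    (hJ : ∀ g ∈ J, ∀ j, homogeneousComponent j g ∈ J)
    (hvan : ∀ g ∈ J, g.IsHomogeneous k → eval a g = 0)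
    (hD : D.IsHomogeneous (k + 1)) (hDa : eval a D ≠ 0) : D ∉ irrelevant R m * J := by
  intro hmem
  rw [irrelevant, mul_comm, ← smul_eq_mul] at hmem
  obtain ⟨c, hc, rfl⟩ := (Submodule.mem_ideal_smul_span_iff_exists_sum J X D).mp hmem
  refine hDa ?_
  rw [← homogeneousComponent_eq_self hD, Finsupp.sum, map_sum, map_sum]
  refine Finset.sum_eq_zero fun i _ => ?_
  rw [smul_eq_mul, homogeneousComponent_add_mul (isHomogeneous_X R i), map_mul,
    hvan _ (hJ _ (hc i) k) (homogeneousComponent_isHomogeneous k _), zero_mul]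

section Arrangement

variable {σ K : Type*} [Field K]

theorem irreducible_of_isHomogeneous_one {l : MvPolynomial σ K} (hl : l.IsHomogeneous 1)
    (hl0 : l ≠ 0) : Irreducible l := by
  refine irreducible_of_totalDegree_eq_one (hl.totalDegree hl0) fun x hx => ?_
  obtain ⟨s, hs⟩ := ne_zero_iff.mp hl0
  exact (ne_zero_of_dvd_ne_zero hs (hx s)).isUnit

theorem isRelPrime_of_isHomogeneous_one {l l' : MvPolynomial σ K} (hl : l.IsHomogeneous 1)
    (hl0 : l ≠ 0) (hl' : l'.IsHomogeneous 1) (hprop : ∀ c : K, l' ≠ c • l) :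
    IsRelPrime l l' := by
  have hl'0 : l' ≠ 0 := zero_smul K l ▸ hprop 0
  refine (irreducible_of_isHomogeneous_one hl hl0).isRelPrime_iff_not_dvd.mpr ?_
  rintro ⟨q, rfl⟩
  have hq : q.totalDegree = 0 := by
    have hdeg := totalDegree_mul_of_isDomain hl0 (right_ne_zero_of_mul hl'0)
    rw [hl'.totalDegree hl'0, hl.totalDegree hl0] at hdeg
    omega
  apply hprop (coeff 0 q)
  rw [smul_eq_C_mul, ← totalDegree_eq_zero_iff_eq_C.mp hq, mul_comm]

theorem squarefree_prod_of_isHomogeneous_one {ι : Type*} [Fintype ι] {L : ι → MvPolynomial σ K}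
    (hhom : ∀ i, (L i).IsHomogeneous 1) (hne : ∀ i, L i ≠ 0)
    (hprop : ∀ i j, i ≠ j → ∀ c : K, L i ≠ c • L j) : Squarefree (∏ i, L i) :=
  Finset.squarefree_prod_of_pairwise_isCoprime
    (fun i _ j _ hij => isRelPrime_of_isHomogeneous_one (hhom i) (hne i) (hhom j)
      (hprop j i hij.symm))
    fun i _ => (irreducible_of_isHomogeneous_one (hhom i) (hne i)).squarefree

end Arrangement

theorem stmt_9_general {K : Type*} [Field K] [CharZero K] {m d : ℕ} (hd : 2 ≤ d)
    {f : MvPolynomial (Fin m) K} (hf : f.IsHomogeneous d) (hsq : Squarefree f)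
    {a : Fin m → K} (ha : eval a f ≠ 0) :
    (∀ g ∈ genResidual a f, ∀ j : ℕ, j ≤ d - 2 → g.IsHomogeneous j → g ∈ pointIdeal a) ∧
      genResidual a f = (genResidual a f ⊓ pointIdeal a) ⊔ Ideal.span {lderiv a f} ∧
      eval a (lderiv a f) ≠ 0 ∧
      lderiv a f ∉ irrelevant K m * genResidual a f := by
  obtain ⟨k, rfl⟩ := Nat.exists_eq_add_of_le' hd
  have ha0 : a ≠ 0 := by
    rintro rfl
    rw [eval_zero] at ha
    exact ha (hf.coeff_eq_zero (by simp))
  have hDa : eval a (lderiv a f) ≠ 0 := by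
    rw [eval_lderiv_self hf]
    exact mul_ne_zero (Nat.cast_ne_zero.mpr (by omega)) ha
  have hD : (lderiv a f).IsHomogeneous (k + 1) := isHomogeneous_lderiv hf a
  have hvan : ∀ g ∈ genResidual a f, ∀ j < k + 1, g.IsHomogeneous j → eval a g = 0 :=
    fun g hg j hj hgj => eval_eq_zero_of_mem_genResidual hf
      (isRelPrime_lderiv_of_squarefree hf hsq ha) hg hgj (by omega)
  have hJ : ∀ g ∈ genResidual a f, ∀ j, homogeneousComponent j g ∈ genResidual a f :=
    fun _ hg => homogeneousComponent_mem_genResidual hf hg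
  exact ⟨fun g hg j hj hgj =>
      mem_pointIdeal_of_eval_eq_zero ha0 hgj (hvan g hg j (by omega) hgj),
    eq_inf_pointIdeal_sup_span ha0 hJ hvan (lderiv_mem_genResidual a f) hD hDa, hDa,
    notMem_irrelevant_mul hJ (fun g hg => hvan g hg k k.lt_succ_self) hD hDa⟩

/-- Let `K` have characteristic zero and let `A` be an arrangement of
`d ≥ 2` hyperplanes in `ℙⁿ`, `n ≥ 2`, given by pairwise non-proportional linear forms
`L i` with `f_A = Π L i`.  Let `ℓ` be a general linear form with dual point `Q = ℓ∨`
(coordinates `a`), and let `r_A = (f_A, ∂f_A/∂ℓ) : Jac(f_A)`.  Then: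
(i) every homogeneous element of `r_A` of degree `≤ d − 2` lies in `I_Q`, i.e.
`[r_A]_j = [r_A ∩ I_Q]_j` for `j ≤ d − 2`; and
(ii) `r_A = (r_A ∩ I_Q) + (∂f_A/∂ℓ)` and `(∂f_A/∂ℓ)(Q) ≠ 0`, so `∂f_A/∂ℓ` belongs to a
minimal generating set of `r_A` (it does not lie in `𝔪·r_A`). -/
theorem stmt_9 {K : Type*} [Field K] [CharZero K] {n d : ℕ} (hn : 2 ≤ n) (hd : 2 ≤ d)
    (L : Fin d → MvPolynomial (Fin (n + 1)) K)
    (hhom : ∀ i, (L i).IsHomogeneous 1) (hne : ∀ i, L i ≠ 0)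
    (hprop : ∀ i j, i ≠ j → ∀ c : K, L i ≠ c • L j) :
    ∃ p : MvPolynomial (Fin (n + 1)) K, p ≠ 0 ∧
      ∀ a : Fin (n + 1) → K, eval a p ≠ 0 →
        (∀ g ∈ genResidual a (∏ i, L i), ∀ j : ℕ, j ≤ d - 2 → g.IsHomogeneous j →
          g ∈ pointIdeal a) ∧
        (genResidual a (∏ i, L i) =
          (genResidual a (∏ i, L i) ⊓ pointIdeal a) ⊔
            Ideal.span {lderiv a (∏ i, L i)}) ∧
        eval a (lderiv a (∏ i, L i)) ≠ 0 ∧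
        lderiv a (∏ i, L i) ∉ irrelevant K (n + 1) * genResidual a (∏ i, L i) := by
  have hf : (∏ i, L i).IsHomogeneous d := by
    simpa using IsHomogeneous.prod Finset.univ L (fun _ => 1) fun i _ => hhom i
  exact ⟨∏ i, L i, Finset.prod_ne_zero_iff.mpr fun i _ => hne i, fun _ ha =>
    stmt_9_general hd hf (squarefree_prod_of_isHomogeneous_one hhom hne hprop) ha⟩
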